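/- The comparison maps φ_*, ψ_* and the homotopy ω_{*+1} all preserve the filtrations: φ_n(F^i(X_n)) ⊆ F^i(B_n(E)), ψ_n(F^i(B_n(E))) ⊆ F^i(X_n), and ω_{n+1}(F^i(B_n(E))) ⊆ F^i(B_{n+1}(E)) for all n ≥ 0 and i ≥ 0. -/

import Mathlib

open TensorProduct DirectSum

set_option maxHeartbeats 1000000
set_option maxSynthPendingDepth 3
set_option synthInstance.maxHeartbeats 400000

noncomputable section

namespace HopfCrossed

variable (k : Type) [CommRing k]

def TpowCat (V : ModuleCat k) : ℕ → ModuleCat k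
  | 0 => ModuleCat.of k k
  | n + 1 => ModuleCat.of k (V ⊗[k] (TpowCat V n))

abbrev Tpow (V : Type) [AddCommGroup V] [Module k V] (n : ℕ) : Type :=
  TpowCat k (ModuleCat.of k V) n

def tp {V : Type} [AddCommGroup V] [Module k V] : ∀ {n : ℕ}, (Fin n → V) → Tpow k V n
  | 0, _ => (1 : k)
  | _ + 1, v => (v 0) ⊗ₜ[k] (tp fun i => v i.succ)

section Coalg
variable {H : Type} [AddCommGroup H] [Module k H]

def itComul [Coalgebra k H] : ∀ n : ℕ, H →ₗ[k] Tpow k H (n + 1)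
  | 0 => (TensorProduct.rid k H).symm.toLinearMap
  | n + 1 =>
      (TensorProduct.map LinearMap.id (itComul n)) ∘ₗ (Coalgebra.comul (R := k))

def SRep [Coalgebra k H] (n : ℕ) (h : H) (N : ℕ) (u : Fin N → Fin (n + 1) → H) : Prop :=
  itComul k n h = ∑ i, tp k (u i)

def iterAct {A : Type} [AddCommGroup A] [Module k A]
    (act : H →ₗ[k] A →ₗ[k] A) : ∀ {s : ℕ}, (Fin s → H) → A → A
  | 0, _, a => a
  | _ + 1, h, a => act (h 0) (iterAct act (fun i => h i.succ) a)

end Coalg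

/-- A weak action of a Hopf algebra `H` on a `k`-algebra `A` (Blattner–Cohen–Montgomery,
Doi–Takeuchi), written `act h a = a^h`. -/
structure WeakAction (k A H : Type) [CommRing k] [Ring A] [Algebra k A] [Ring H] [HopfAlgebra k H] : Type where
  act : H →ₗ[k] A →ₗ[k] A
  act_mul : ∀ (h : H) (a b : A) (N : ℕ) (u : Fin N → Fin 2 → H), SRep k 1 h N u →
    act h (a * b) = ∑ i, act (u i 0) a * act (u i 1) b
  act_one : ∀ h : H, act h 1 = Coalgebra.counit (R := k) h • (1 : A)
  one_act : ∀ a : A, act 1 a = a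

variable {A H : Type} [Ring A] [Algebra k A] [Ring H] [HopfAlgebra k H]
variable {k}

/-- Normality of the cocycle `f`. -/
def IsNormal (f : H →ₗ[k] H →ₗ[k] A) : Prop :=
  ∀ h : H, f h 1 = Coalgebra.counit (R := k) h • (1 : A) ∧
    f 1 h = Coalgebra.counit (R := k) h • (1 : A)

/-- The cocycle condition
`f(l⁽¹⁾,m⁽¹⁾)^{h⁽¹⁾} f(h⁽²⁾, l⁽²⁾m⁽²⁾) = f(h⁽¹⁾,l⁽¹⁾) f(h⁽²⁾l⁽²⁾, m)`. -/
def IsCocycle (W : WeakAction k A H) (f : H →ₗ[k] H →ₗ[k] A) : Prop :=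
  ∀ (h l m : H) (N₁ N₂ N₃ : ℕ) (u : Fin N₁ → Fin 2 → H) (v : Fin N₂ → Fin 2 → H)
    (w : Fin N₃ → Fin 2 → H),
    SRep k 1 h N₁ u → SRep k 1 l N₂ v → SRep k 1 m N₃ w →
    (∑ i, ∑ j, ∑ p, W.act (u i 0) (f (v j 0) (w p 0)) * f (u i 1) (v j 1 * w p 1)) =
      ∑ i, ∑ j, f (u i 0) (v j 0) * f (u i 1 * v j 1) m

/-- The twisted module condition
`(a^{l⁽¹⁾})^{h⁽¹⁾} f(h⁽²⁾,l⁽²⁾) = f(h⁽¹⁾,l⁽¹⁾) a^{h⁽²⁾l⁽²⁾}`. -/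
def IsTwistedModule (W : WeakAction k A H) (f : H →ₗ[k] H →ₗ[k] A) : Prop :=
  ∀ (h l : H) (a : A) (N₁ N₂ : ℕ) (u : Fin N₁ → Fin 2 → H) (v : Fin N₂ → Fin 2 → H),
    SRep k 1 h N₁ u → SRep k 1 l N₂ v →
    (∑ i, ∑ j, W.act (u i 0) (W.act (v j 0) a) * f (u i 1) (v j 1)) =
      ∑ i, ∑ j, f (u i 0) (v j 0) * W.act (u i 1 * v j 1) a

variable (k A H) in
/-- A crossed product `E = A #_f H` of `A` by `H`:  a ring `E` identified with `A ⊗ H`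
as a `k`-module, whose multiplication is given by the crossed product formula
`(a # h)(b # l) = a b^{h⁽¹⁾} f(h⁽²⁾,l⁽¹⁾) # h⁽³⁾ l⁽²⁾`. -/
structure CrossedProduct (E : Type) [Ring E] [Algebra k E] extends WeakAction k A H where
  f : H →ₗ[k] H →ₗ[k] A
  ι : (A ⊗[k] H) ≃ₗ[k] E
  ι_one : ι (1 ⊗ₜ[k] 1) = 1
  ι_mul : ∀ (a b : A) (h l : H) (N M : ℕ) (u : Fin N → Fin 3 → H) (v : Fin M → Fin 2 → H),
    SRep k 2 h N u → SRep k 1 l M v →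
    ι (a ⊗ₜ[k] h) * ι (b ⊗ₜ[k] l) =
      ∑ i, ∑ j, ι ((a * act (u i 0) b * f (u i 1) (v j 0)) ⊗ₜ[k] (u i 2 * v j 1))
  f_normal : IsNormal f
  f_cocycle : IsCocycle toWeakAction f
  f_twisted : IsTwistedModule toWeakAction f

namespace CrossedProduct

variable {E : Type} [Ring E] [Algebra k E] (S : CrossedProduct k A H E)

/-- The canonical map `A → E`, `a ↦ a # 1`. -/
def aE : A →ₗ[k] E := S.ι.toLinearMap ∘ₗ (TensorProduct.mk k A H).flip 1

/-- The canonical map `H → E`, `h ↦ 1 # h`. -/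
def hE : H →ₗ[k] E := S.ι.toLinearMap ∘ₗ (TensorProduct.mk k A H) 1

end CrossedProduct


section Hochschild

variable (k) in
/-- For a `k`-algebra `B`, the submodule `k·1 ⊆ B`. -/
abbrev unitSub (B : Type) [Ring B] [Algebra k B] : Submodule k B :=
  LinearMap.range (Algebra.linearMap k B)

variable (k) in
/-- `B̄ = B/k`. -/
abbrev Qbar (B : Type) [Ring B] [Algebra k B] : Type := B ⧸ unitSub k B

variable (k) in
/-- The canonical projection `B → B̄`. -/
abbrev qbar (B : Type) [Ring B] [Algebra k B] : B →ₗ[k] Qbar k B :=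
  (unitSub k B).mkQ

/-- A `B`-bimodule structure (with commuting `k`-linear left and right actions)
on a `k`-module `M`. -/
structure Bimod (k B M : Type) [CommRing k] [Ring B] [Algebra k B]
    [AddCommGroup M] [Module k M] : Type where
  l : B →ₗ[k] M →ₗ[k] M
  r : B →ₗ[k] M →ₗ[k] M
  l_one : l 1 = LinearMap.id
  r_one : r 1 = LinearMap.id
  l_mul : ∀ x y : B, l (x * y) = l x ∘ₗ l y
  r_mul : ∀ x y : B, r (x * y) = r y ∘ₗ r x
  lr_comm : ∀ x y : B, l x ∘ₗ r y = r y ∘ₗ l x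

/-- Replace the `r`-tuple `a` by the `(r-1)`-tuple obtained by multiplying the
`i`-th and `(i+1)`-st entries. -/
def mulAt {A : Type} [Mul A] {r : ℕ} (a : Fin (r + 1) → A) (i : Fin r) (j : Fin r) : A :=
  if (j : ℕ) < (i : ℕ) then a j.castSucc
  else if (j : ℕ) = (i : ℕ) then a j.castSucc * a j.succ else a j.succ

variable (k) in
/-- The degree-`n` part `M ⊗ B̄^{⊗n}` of the normalized Hochschild chain complex. -/
abbrev HCh (B M : Type) [Ring B] [Algebra k B] [AddCommGroup M] [Module k M]
    (n : ℕ) : Type :=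
  M ⊗[k] Tpow k (Qbar k B) n

variable (k) in
/-- `IsHochschildD l r bd` says that `bd` is the differential of the normalized
Hochschild chain complex of `B` with coefficients in the bimodule `M` (with left
action `l` and right action `r`):
`b(m ⊗ x₁ ⊗ ⋯ ⊗ xₙ) = m x₁ ⊗ x₂ ⊗ ⋯ + ∑ (-1)^i m ⊗ ⋯ ⊗ xᵢxᵢ₊₁ ⊗ ⋯ + (-1)^n xₙ m ⊗ x₁ ⊗ ⋯ ⊗ xₙ₋₁`. -/
def IsHochschildD {B M : Type} [Ring B] [Algebra k B] [AddCommGroup M] [Module k M]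
    (l r : B →ₗ[k] M →ₗ[k] M)
    (bd : ∀ n : ℕ, HCh k B M (n + 1) →ₗ[k] HCh k B M n) : Prop :=
  ∀ (n : ℕ) (m : M) (x : Fin (n + 1) → B),
    bd n (m ⊗ₜ[k] tp k (fun i => qbar k B (x i))) =
      r (x 0) m ⊗ₜ[k] tp k (fun i : Fin n => qbar k B (x i.succ))
      + (∑ i : Fin n, ((-1 : ℤ) ^ ((i : ℕ) + 1)) •
          (m ⊗ₜ[k] tp k (fun j => qbar k B (mulAt x i j))))
      + ((-1 : ℤ) ^ (n + 1)) •
          (l (x (Fin.last n)) m ⊗ₜ[k] tp k (fun i : Fin n => qbar k B (x i.castSucc)))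

variable (k) in
/-- The homology of a (not necessarily everywhere-defined) chain complex
`⋯ → C (n+1) → C n → ⋯ → C 0`; in degree `n+1` it is `ker (d n) / im (d (n+1))`, and in
degree `0` it is `C 0 / im (d 0)`. -/
def Hml {C : ℕ → Type} [∀ n, AddCommGroup (C n)] [∀ n, Module k (C n)]
    (d : ∀ n : ℕ, C (n + 1) →ₗ[k] C n) : ℕ → Type
  | 0 => C 0 ⧸ LinearMap.range (d 0)
  | n + 1 => LinearMap.ker (d n) ⧸
      (LinearMap.range (d (n + 1))).comap (LinearMap.ker (d n)).subtype

instance {C : ℕ → Type} [∀ n, AddCommGroup (C n)] [∀ n, Module k (C n)]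
    (d : ∀ n : ℕ, C (n + 1) →ₗ[k] C n) : ∀ n, AddCommGroup (Hml k d n)
  | 0 => inferInstanceAs (AddCommGroup (C 0 ⧸ LinearMap.range (d 0)))
  | n + 1 => inferInstanceAs (AddCommGroup (LinearMap.ker (d n) ⧸
      (LinearMap.range (d (n + 1))).comap (LinearMap.ker (d n)).subtype))

instance {C : ℕ → Type} [∀ n, AddCommGroup (C n)] [∀ n, Module k (C n)]
    (d : ∀ n : ℕ, C (n + 1) →ₗ[k] C n) : ∀ n, Module k (Hml k d n)
  | 0 => inferInstanceAs (Module k (C 0 ⧸ LinearMap.range (d 0)))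
  | n + 1 => inferInstanceAs (Module k (LinearMap.ker (d n) ⧸
      (LinearMap.range (d (n + 1))).comap (LinearMap.ker (d n)).subtype))

end Hochschild

section Conv

variable {A H : Type} [Ring A] [Algebra k A] [Ring H] [HopfAlgebra k H]

/-- `IsConvInverse f g` : `g` is the convolution inverse of `f` in the convolution
algebra `Hom_k(H ⊗ H, A)`, i.e. `f * g = g * f = ε ⊗ ε · 1_A`. -/
def IsConvInverse (f g : H →ₗ[k] H →ₗ[k] A) : Prop :=
  ∀ (h l : H) (N M' : ℕ) (u : Fin N → Fin 2 → H) (v : Fin M' → Fin 2 → H),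
    SRep k 1 h N u → SRep k 1 l M' v →
    (∑ i, ∑ j, f (u i 0) (v j 0) * g (u i 1) (v j 1)) =
        (Coalgebra.counit (R := k) h * Coalgebra.counit (R := k) l) • (1 : A) ∧
    (∑ i, ∑ j, g (u i 0) (v j 0) * f (u i 1) (v j 1)) =
        (Coalgebra.counit (R := k) h * Coalgebra.counit (R := k) l) • (1 : A)

variable {E : Type} [Ring E] [Algebra k E]

/-- The elementary term `f⁻¹(S(y), z) # S(x)` appearing in the formula for the
convolution inverse `(1 # h)⁻¹ = f⁻¹(S(h⁽²⁾), h⁽³⁾) # S(h⁽¹⁾)`. -/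
def ginv (S : CrossedProduct k A H E) (finv : H →ₗ[k] H →ₗ[k] A) (x y z : H) : E :=
  S.ι ((finv (HopfAlgebra.antipode (R := k) y) z) ⊗ₜ[k] HopfAlgebra.antipode (R := k) x)

end Conv

section Bar

variable {H : Type} [Ring H] [HopfAlgebra k H]

variable (k) in
/-- The degree-`s` part `H̄^{⊗s} ⊗ N` of the normalized bar complex computing
`H_*(H, N) = Tor_*^H(k, N)`, i.e. `(H̄^* ⊗ H, d_*) ⊗_H N`. -/
abbrev BarCh (N : Type) [AddCommGroup N] [Module k N] (s : ℕ) : Type :=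
  Tpow k (Qbar k H) s ⊗[k] N

variable (k) in
/-- `IsBarD act d` : `d` is the differential of the normalized bar complex computing the
homology `H_*(H, N)` of `H` with coefficients in the left `H`-module `N` (action `act`). -/
def IsBarD {N : Type} [AddCommGroup N] [Module k N] (act : H →ₗ[k] N →ₗ[k] N)
    (d : ∀ s : ℕ, BarCh k (H := H) N (s + 1) →ₗ[k] BarCh k (H := H) N s) : Prop :=
  ∀ (s : ℕ) (h : Fin (s + 1) → H) (n : N),
    d s (tp k (fun i => qbar k H (h i)) ⊗ₜ[k] n) =
      Coalgebra.counit (R := k) (h 0) •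
          (tp k (fun i : Fin s => qbar k H (h i.succ)) ⊗ₜ[k] n)
      + (∑ i : Fin s, ((-1 : ℤ) ^ ((i : ℕ) + 1)) •
          (tp k (fun j => qbar k H (mulAt h i j)) ⊗ₜ[k] n))
      + ((-1 : ℤ) ^ (s + 1)) •
          (tp k (fun i : Fin s => qbar k H (h i.castSucc)) ⊗ₜ[k] act (h (Fin.last s)) n)

end Bar

section Sep

variable {A : Type} [Ring A] [Algebra k A]

variable (k A) in
/-- `A` is a separable `k`-algebra: the multiplication map `A ⊗ A → A` admits an
`A`-bimodule splitting (equivalently, `A` is projective as an `A ⊗ Aᵒᵖ`-module). -/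
def IsSeparableAlg : Prop :=
  ∃ s : A →ₗ[k] A ⊗[k] A,
    (LinearMap.mul' k A) ∘ₗ s = LinearMap.id ∧
    ∀ (a b x : A), s (a * x * b) =
      TensorProduct.map (LinearMap.mulLeft k a) (LinearMap.mulRight k b) (s x)

end Sep


section Resolution

variable (k A H E : Type) [CommRing k] [Ring A] [Algebra k A] [Ring H] [HopfAlgebra k H]
  [Ring E] [Algebra k E]

/-- The `E`-bimodule `X_{rs} = E ⊗ H̄^{⊗s} ⊗ Ā^{⊗r} ⊗ E`. -/
abbrev Xc (r s : ℕ) : Type :=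
  E ⊗[k] (Tpow k (Qbar k H) s ⊗[k] (Tpow k (Qbar k A) r ⊗[k] E))

/-- The `E`-bimodule `Y_s = E ⊗ H̄^{⊗s} ⊗ H`. -/
abbrev Yc (s : ℕ) : Type := E ⊗[k] (Tpow k (Qbar k H) s ⊗[k] H)

variable {k A H E}

/-- The generator `e ⊗ h̄₁ ⊗ ⋯ ⊗ h̄ₛ ⊗ ā₁ ⊗ ⋯ ⊗ āᵣ ⊗ e'` of `X_{rs}`. -/
def xgen (e : E) {s r : ℕ} (hs : Fin s → H) (as : Fin r → A) (e' : E) : Xc k A H E r s :=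
  e ⊗ₜ[k] (tp k (fun i => qbar k H (hs i)) ⊗ₜ[k] (tp k (fun i => qbar k A (as i)) ⊗ₜ[k] e'))

/-- The generator `e ⊗ h̄₁ ⊗ ⋯ ⊗ h̄ₛ ⊗ h` of `Y_s`. -/
def ygen (e : E) {s : ℕ} (hs : Fin s → H) (h : H) : Yc k H E s :=
  e ⊗ₜ[k] (tp k (fun i => qbar k H (hs i)) ⊗ₜ[k] h)

/-- Left multiplication by `e ∈ E` on `X_{rs}`. -/
def lX (e : E) {r s : ℕ} : Xc k A H E r s →ₗ[k] Xc k A H E r s :=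
  TensorProduct.map (LinearMap.mulLeft k e) LinearMap.id

/-- Right multiplication by `e ∈ E` on `X_{rs}`. -/
def rX (e : E) {r s : ℕ} : Xc k A H E r s →ₗ[k] Xc k A H E r s :=
  TensorProduct.map LinearMap.id (TensorProduct.map LinearMap.id
    (TensorProduct.map LinearMap.id (LinearMap.mulRight k e)))

/-- Transport along equalities of indices. -/
def xcast {r r' s s' : ℕ} (hr : r = r') (hs : s = s') :
    Xc k A H E r s →ₗ[k] Xc k A H E r' s' := by
  subst hr; subst hs; exact LinearMap.id

end Resolution

section ResData

variable {k A H E : Type} [CommRing k] [Ring A] [Algebra k A] [Ring H] [HopfAlgebra k H]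
  [Ring E] [Algebra k E]

variable (k A H E) in
/-- The resolution `(X_*, d_*)` of the crossed product `E = A #_f H` of Section 1 of
the paper: the maps `μ_s`, `∂_s`, `σ⁰`, and the (higher) differentials `d^l_{rs}`
(`d⁰ = dl 0`), together with all of their defining equations.  Here
`dl l r s : X_{rs} → X_{r+l-1, s-l}`. -/
structure ResData (S : CrossedProduct k A H E) : Type where
  mu : ∀ s : ℕ, Xc k A H E 0 s →ₗ[k] Yc k H E s
  del : ∀ s : ℕ, Yc k H E (s + 1) →ₗ[k] Yc k H E s
  sig0 : ∀ s : ℕ, Yc k H E s →ₗ[k] Xc k A H E 0 s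
  sig : ∀ r s : ℕ, Xc k A H E r s →ₗ[k] Xc k A H E (r + 1) s
  dl : ∀ l r s : ℕ, Xc k A H E r s →ₗ[k] Xc k A H E (r + l - 1) (s - l)
  /-- `μ_s(a₀ ⊗ 𝐡_{0s} ⊗ a₁ ⊗ h_{s+1}) = a₀ a₁^{𝐡_{0s}⁽¹⁾} ⊗ 𝐡_{0s}⁽²⁾ ⊗ h_{s+1}`. -/
  mu_eq : ∀ (s : ℕ) (a₀ : A) (h₀ : H) (hs : Fin s → H) (b : A) (h' : H)
    (Nv : Fin (s + 1) → ℕ) (v : ∀ i, Fin (Nv i) → Fin 2 → H),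
    (∀ i, SRep k 1 ((Fin.cons h₀ hs : Fin (s + 1) → H) i) (Nv i) (v i)) →
    mu s (xgen (S.ι (a₀ ⊗ₜ[k] h₀)) hs (fun i : Fin 0 => i.elim0) (S.ι (b ⊗ₜ[k] h'))) =
      ∑ c : (∀ i, Fin (Nv i)),
        ygen (S.ι ((a₀ * iterAct k S.act (fun i => v i (c i) 0) b) ⊗ₜ[k] (v 0 (c 0) 1)))
          (fun i : Fin s => v i.succ (c i.succ) 1) h'
  /-- `d⁰_{rs}` is the Hochschild-type boundary in the `A`-direction. -/
  d0_eq : ∀ (r s : ℕ) (a₀ : A) (h₀ : H) (hs : Fin s → H) (as : Fin (r + 1) → A)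
    (b : A) (h' : H) (Nv : Fin (s + 1) → ℕ) (v : ∀ i, Fin (Nv i) → Fin 2 → H),
    (∀ i, SRep k 1 ((Fin.cons h₀ hs : Fin (s + 1) → H) i) (Nv i) (v i)) →
    dl 0 (r + 1) s (xgen (S.ι (a₀ ⊗ₜ[k] h₀)) hs as (S.ι (b ⊗ₜ[k] h'))) =
      (∑ c : (∀ i, Fin (Nv i)),
        xgen (S.ι ((a₀ * iterAct k S.act (fun i => v i (c i) 0) (as 0)) ⊗ₜ[k] (v 0 (c 0) 1)))
          (fun i : Fin s => v i.succ (c i.succ) 1)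
          (fun i : Fin r => as i.succ) (S.ι (b ⊗ₜ[k] h')))
      + (∑ i : Fin r, ((-1 : ℤ) ^ ((i : ℕ) + 1)) •
          xgen (S.ι (a₀ ⊗ₜ[k] h₀)) hs (mulAt as i) (S.ι (b ⊗ₜ[k] h')))
      + ((-1 : ℤ) ^ (r + 1)) •
          xgen (S.ι (a₀ ⊗ₜ[k] h₀)) hs (fun i : Fin r => as i.castSucc)
            (S.ι ((as (Fin.last r) * b) ⊗ₜ[k] h'))
  /-- `∂_s(a ⊗ 𝐡) = ∑ᵢ (-1)^{i+1} a f(hᵢ⁽¹⁾, hᵢ₊₁⁽¹⁾)^{𝐡_{0,i-1}⁽¹⁾} ⊗ 𝐡_{0,i-1}⁽²⁾ ⊗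
  hᵢ⁽²⁾hᵢ₊₁⁽²⁾ ⊗ 𝐡_{i+2,s+1}`. -/
  del_eq : ∀ (s : ℕ) (a : A) (h₀ : H) (hs : Fin (s + 1) → H) (h' : H)
    (Nv : Fin (s + 3) → ℕ) (v : ∀ i, Fin (Nv i) → Fin 2 → H),
    (∀ i, SRep k 1 ((Fin.cons h₀ (Fin.snoc hs h') : Fin (s + 3) → H) i) (Nv i) (v i)) →
    del s (ygen (S.ι (a ⊗ₜ[k] h₀)) hs h') =
      ∑ i : Fin (s + 2), ((-1 : ℤ) ^ ((i : ℕ) + 1)) •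
        (∑ c : (∀ j : Fin ((i : ℕ) + 2),
            Fin (Nv ⟨(j : ℕ), by have := j.isLt; have := i.isLt; omega⟩)),
          ygen
            (S.ι ((a * iterAct k S.act
                (fun j : Fin (i : ℕ) =>
                  v ⟨(j : ℕ), by have := j.isLt; have := i.isLt; omega⟩
                    (c ⟨(j : ℕ), by have := j.isLt; have := i.isLt; omega⟩) 0)
                (S.f (v ⟨(i : ℕ), by have := i.isLt; omega⟩
                        (c ⟨(i : ℕ), by omega⟩) 0)
                     (v ⟨(i : ℕ) + 1, by have := i.isLt; omega⟩
                        (c ⟨(i : ℕ) + 1, by omega⟩) 0))) ⊗ₜ[k]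
              (if (i : ℕ) = 0 then
                  (v ⟨0, by omega⟩ (c ⟨0, by omega⟩) 1) * (v ⟨1, by omega⟩ (c ⟨1, by omega⟩) 1)
                else v ⟨0, by omega⟩ (c ⟨0, by omega⟩) 1)))
            (fun p : Fin s =>
              if hp : (p : ℕ) + 1 < (i : ℕ) then
                v ⟨(p : ℕ) + 1, by have := p.isLt; have := i.isLt; omega⟩
                  (c ⟨(p : ℕ) + 1, by omega⟩) 1
              else if hp' : (p : ℕ) + 1 = (i : ℕ) then
                (v ⟨(p : ℕ) + 1, by have := p.isLt; omega⟩ (c ⟨(p : ℕ) + 1, by omega⟩) 1) *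
                  (v ⟨(p : ℕ) + 2, by have := p.isLt; have := i.isLt; omega⟩
                    (c ⟨(p : ℕ) + 2, by omega⟩) 1)
              else (Fin.cons h₀ (Fin.snoc hs h') : Fin (s + 3) → H) ⟨(p : ℕ) + 2, by have := p.isLt; omega⟩)
            (if hi : (i : ℕ) = s + 1 then
                (v ⟨s + 1, by omega⟩ (c ⟨s + 1, by omega⟩) 1) *
                  (v ⟨s + 2, by omega⟩ (c ⟨s + 2, by omega⟩) 1)
              else (Fin.cons h₀ (Fin.snoc hs h') : Fin (s + 3) → H) ⟨s + 2, by omega⟩))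
  /-- `σ⁰_{0,s}(a₀ ⊗ 𝐡 ⊗ h_{s+1}) = a₀ ⊗ 𝐡 ⊗ 1 # h_{s+1}`. -/
  sig0_eq : ∀ (s : ℕ) (e : E) (hs : Fin s → H) (h : H),
    sig0 s (ygen e hs h) = xgen e hs (fun i : Fin 0 => i.elim0) (S.hE h)
  /-- `σ⁰_{r+1,s}(a₀ ⊗ 𝐡 ⊗ 𝐚 ⊗ a # h) = (-1)^{r+1} a₀ ⊗ 𝐡 ⊗ 𝐚 ⊗ ā ⊗ 1 # h`. -/
  sig_eq : ∀ (r s : ℕ) (e : E) (hs : Fin s → H) (as : Fin r → A) (b : A) (h' : H),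
    sig r s (xgen e hs as (S.ι (b ⊗ₜ[k] h'))) =
      ((-1 : ℤ) ^ (r + 1)) • xgen e hs (Fin.snoc as b) (S.hE h')
  /-- `d¹_{0s} = -σ⁰ ∘ ∂ ∘ μ` on `k ⊗ H̄^s ⊗ k`. -/
  dl_one_zero : ∀ (s : ℕ) (hs : Fin (s + 1) → H),
    dl 1 0 (s + 1) (xgen (1 : E) hs (fun i : Fin 0 => i.elim0) (1 : E)) =
      - sig0 s (del s (mu (s + 1) (xgen (1 : E) hs (fun i : Fin 0 => i.elim0) (1 : E))))
  /-- `d^l_{0s} = -∑_{j=1}^{l-1} σ⁰ ∘ d^{l-j} ∘ d^j` on `k ⊗ H̄^s ⊗ k`, for `1 < l ≤ s`. -/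
  dl_zero : ∀ (l s : ℕ) (hl : 2 ≤ l) (hls : l ≤ s) (hs : Fin s → H),
    dl l 0 s (xgen (1 : E) hs (fun i : Fin 0 => i.elim0) (1 : E)) =
      - ∑ j : Fin (l - 1),
        xcast (show (l - 2) + 1 = 0 + l - 1 by omega) rfl
          (sig (l - 2) (s - l)
            (xcast
              (show (j : ℕ) + (l - ((j : ℕ) + 1)) - 1 = l - 2 by
                have := j.isLt; omega)
              (show (s - ((j : ℕ) + 1)) - (l - ((j : ℕ) + 1)) = s - l by
                have := j.isLt; omega)
              (dl (l - ((j : ℕ) + 1)) ((j : ℕ)) (s - ((j : ℕ) + 1))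
                (xcast (show 0 + ((j : ℕ) + 1) - 1 = (j : ℕ) by omega) rfl
                  (dl ((j : ℕ) + 1) 0 s
                    (xgen (1 : E) hs (fun i : Fin 0 => i.elim0) (1 : E)))))))
  /-- `d^l_{rs} = -∑_{j=0}^{l-1} σ⁰ ∘ d^{l-j} ∘ d^j` on `k ⊗ H̄^s ⊗ Ā^r ⊗ k`, for `r > 0`,
  `1 ≤ l ≤ s`. -/
  dl_succ : ∀ (l r s : ℕ) (hl : 1 ≤ l) (hls : l ≤ s) (hs : Fin s → H) (as : Fin (r + 1) → A),
    dl l (r + 1) s (xgen (1 : E) hs as (1 : E)) =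
      - ∑ j : Fin l,
        xcast (show (r + l - 1) + 1 = (r + 1) + l - 1 by omega) rfl
          (sig (r + l - 1) (s - l)
            (xcast
              (show (r + (j : ℕ)) + (l - (j : ℕ)) - 1 = r + l - 1 by
                have := j.isLt; omega)
              (show (s - (j : ℕ)) - (l - (j : ℕ)) = s - l by
                have := j.isLt; omega)
              (dl (l - (j : ℕ)) (r + (j : ℕ)) (s - (j : ℕ))
                (xcast (show (r + 1) + (j : ℕ) - 1 = r + (j : ℕ) by omega) rfl
                  (dl (j : ℕ) (r + 1) s (xgen (1 : E) hs as (1 : E)))))))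
  /-- Each `d^l_{rs}` is a map of `E`-bimodules. -/
  dl_lmul : ∀ (l r s : ℕ) (e : E), dl l r s ∘ₗ lX e = lX e ∘ₗ dl l r s
  dl_rmul : ∀ (l r s : ℕ) (e : E), dl l r s ∘ₗ rX e = rX e ∘ₗ dl l r s

end ResData

section Xtot

variable {k A H E : Type} [CommRing k] [Ring A] [Algebra k A] [Ring H] [HopfAlgebra k H]
  [Ring E] [Algebra k E]

variable (k A H E) in
/-- The total module `X_n = ⊕_{r+s=n} X_{rs}`. -/
abbrev XT (n : ℕ) : Type :=
  ⨁ (s : Fin (n + 1)), Xc k A H E (n - (s : ℕ)) (s : ℕ)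

/-- The total differential `d_n = ∑_{r+s=n, r+l>0} ∑_{l=0}^{s} d^l_{rs}`. -/
noncomputable def dT {S : CrossedProduct k A H E} (R : ResData k A H E S) (n : ℕ) :
    XT k A H E (n + 1) →ₗ[k] XT k A H E n :=
  DirectSum.toModule k (Fin (n + 2)) (XT k A H E n) (fun s =>
    ∑ l : Fin ((s : ℕ) + 1),
      if h : 0 < (n + 1 - (s : ℕ)) + (l : ℕ) then
        (DirectSum.lof k (Fin (n + 1)) (fun s' : Fin (n + 1) => Xc k A H E (n - (s' : ℕ)) (s' : ℕ))
            ⟨(s : ℕ) - (l : ℕ), by have := s.isLt; have := l.isLt; omega⟩) ∘ₗ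
          xcast
            (show (n + 1 - (s : ℕ)) + (l : ℕ) - 1 = n - ((s : ℕ) - (l : ℕ)) by
              have := s.isLt; have := l.isLt; omega)
            rfl ∘ₗ
          R.dl (l : ℕ) (n + 1 - (s : ℕ)) (s : ℕ)
      else 0)

/-- Left multiplication by `e ∈ E` on `X_n`. -/
noncomputable def lT (e : E) (n : ℕ) : XT k A H E n →ₗ[k] XT k A H E n :=
  DirectSum.toModule k (Fin (n + 1)) (XT k A H E n) (fun s =>
    (DirectSum.lof k (Fin (n + 1)) (fun s' : Fin (n + 1) => Xc k A H E (n - (s' : ℕ)) (s' : ℕ)) s)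
      ∘ₗ lX e)

/-- Right multiplication by `e ∈ E` on `X_n`. -/
noncomputable def rT (e : E) (n : ℕ) : XT k A H E n →ₗ[k] XT k A H E n :=
  DirectSum.toModule k (Fin (n + 1)) (XT k A H E n) (fun s =>
    (DirectSum.lof k (Fin (n + 1)) (fun s' : Fin (n + 1) => Xc k A H E (n - (s' : ℕ)) (s' : ℕ)) s)
      ∘ₗ rX e)

/-- The augmentation `X_0 → E` induced by a map `μ : X_{00} → E`. -/
noncomputable def multT (mult : Xc k A H E 0 0 →ₗ[k] E) : XT k A H E 0 →ₗ[k] E :=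
  DirectSum.toModule k (Fin 1) E (fun s =>
    mult ∘ₗ xcast (show 0 - (s : ℕ) = 0 by have := s.isLt; omega)
      (show (s : ℕ) = 0 by have := s.isLt; omega))

end Xtot

section BarE

variable {k A H E : Type} [CommRing k] [Ring A] [Algebra k A] [Ring H] [HopfAlgebra k H]
  [Ring E] [Algebra k E]

variable (k E) in
/-- The degree-`n` part `B_n(E) = E ⊗ Ē^{⊗n} ⊗ E` of the normalized Hochschild
resolution of `E`. -/
abbrev Bch (n : ℕ) : Type := E ⊗[k] (Tpow k (Qbar k E) n ⊗[k] E)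

/-- The generator `e ⊗ x̄₁ ⊗ ⋯ ⊗ x̄ₙ ⊗ e'` of `B_n(E)`. -/
def bgen (e : E) {n : ℕ} (xs : Fin n → E) (e' : E) : Bch k E n :=
  e ⊗ₜ[k] (tp k (fun i => qbar k E (xs i)) ⊗ₜ[k] e')

/-- Left multiplication by `e ∈ E` on `B_n(E)`. -/
noncomputable def lB (e : E) {n : ℕ} : Bch k E n →ₗ[k] Bch k E n :=
  TensorProduct.map (LinearMap.mulLeft k e) LinearMap.id

/-- Right multiplication by `e ∈ E` on `B_n(E)`. -/
noncomputable def rB (e : E) {n : ℕ} : Bch k E n →ₗ[k] Bch k E n :=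
  TensorProduct.map LinearMap.id (TensorProduct.map LinearMap.id (LinearMap.mulRight k e))

variable (k E) in
/-- `IsBp bp` : `bp` is the differential `b'` of the normalized Hochschild resolution. -/
def IsBp (bp : ∀ n : ℕ, Bch k E (n + 1) →ₗ[k] Bch k E n) : Prop :=
  ∀ (n : ℕ) (e : E) (xs : Fin (n + 1) → E) (e' : E),
    bp n (bgen e xs e') =
      bgen (e * xs 0) (fun i : Fin n => xs i.succ) e'
      + (∑ i : Fin n, ((-1 : ℤ) ^ ((i : ℕ) + 1)) • bgen e (mulAt xs i) e')
      + ((-1 : ℤ) ^ (n + 1)) • bgen e (fun i : Fin n => xs i.castSucc) (xs (Fin.last n) * e')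

variable (k E) in
/-- `IsXi xi` : `xi` is the left `E`-linear contracting homotopy
`ξ_{n+1}(𝐱) = (-1)^{n+1} 𝐱 ⊗ 1` of the normalized Hochschild resolution. -/
def IsXi (xi : ∀ n : ℕ, Bch k E n →ₗ[k] Bch k E (n + 1)) : Prop :=
  ∀ (n : ℕ) (e : E) (xs : Fin n → E) (e' : E),
    xi n (bgen e xs e') = ((-1 : ℤ) ^ (n + 1)) • bgen e (Fin.snoc xs e') (1 : E)

end BarE

section Statement2

variable {k A H E : Type} [CommRing k] [Ring A] [Algebra k A] [Ring H] [HopfAlgebra k H]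
  [Ring E] [Algebra k E]

/-- Left multiplication by `e ∈ E` on `Y_s`. -/
noncomputable def lY (e : E) {s : ℕ} : Yc k H E s →ₗ[k] Yc k H E s :=
  TensorProduct.map (LinearMap.mulLeft k e) LinearMap.id

/-- The map `μ'_n : X_n → Y_n` which is `μ_n` on `X_{0n}` and `0` on `X_{r,n-r}`, `r > 0`. -/
noncomputable def muT {S : CrossedProduct k A H E} (R : ResData k A H E S) (n : ℕ) :
    XT k A H E n →ₗ[k] Yc k H E n :=
  DirectSum.toModule k (Fin (n + 1)) (Yc k H E n) (fun s =>
    if h : (s : ℕ) = n then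
      R.mu n ∘ₗ xcast (show n - (s : ℕ) = 0 by omega) h
    else 0)

/-- `σ̄₀ = σ⁰₀₀ ∘ σ⁻¹₀`. -/
noncomputable def sbar0 {S : CrossedProduct k A H E} (R : ResData k A H E S)
    (σm : E →ₗ[k] Yc k H E 0) : E →ₗ[k] XT k A H E 0 :=
  (DirectSum.lof k (Fin 1) (fun s' : Fin 1 => Xc k A H E (0 - (s' : ℕ)) (s' : ℕ)) 0) ∘ₗ
    R.sig0 0 ∘ₗ σm

/-- `σ̄_{n+1} = -∑_{l=0}^{n+1} σ^l_{l,n-l+1} ∘ σ⁻¹_{n+1} ∘ μ_n + ∑_{r+s=n} ∑_{l=0}^s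
σ^l_{r+l+1,s-l}`. -/
noncomputable def sbar {S : CrossedProduct k A H E} (R : ResData k A H E S)
    (slY : ∀ l s : ℕ, Yc k H E s →ₗ[k] Xc k A H E l (s - l))
    (slX : ∀ l r s : ℕ, Xc k A H E r s →ₗ[k] Xc k A H E (r + l + 1) (s - l))
    (sY : ∀ s : ℕ, Yc k H E s →ₗ[k] Yc k H E (s + 1)) (n : ℕ) :
    XT k A H E n →ₗ[k] XT k A H E (n + 1) :=
  - ((∑ l : Fin (n + 2),
      (DirectSum.lof k (Fin (n + 2)) (fun s' : Fin (n + 2) => Xc k A H E (n + 1 - (s' : ℕ)) (s' : ℕ))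
          ⟨n + 1 - (l : ℕ), by omega⟩) ∘ₗ
        xcast (show (l : ℕ) = n + 1 - (n + 1 - (l : ℕ)) by have := l.isLt; omega) rfl ∘ₗ
        slY (l : ℕ) (n + 1)) ∘ₗ sY n ∘ₗ muT R n)
  + DirectSum.toModule k (Fin (n + 1)) (XT k A H E (n + 1)) (fun s =>
      ∑ l : Fin ((s : ℕ) + 1),
        (DirectSum.lof k (Fin (n + 2)) (fun s' : Fin (n + 2) => Xc k A H E (n + 1 - (s' : ℕ)) (s' : ℕ))
            ⟨(s : ℕ) - (l : ℕ), by have := s.isLt; have := l.isLt; omega⟩) ∘ₗ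
          xcast
            (show (n - (s : ℕ)) + (l : ℕ) + 1 = n + 1 - ((s : ℕ) - (l : ℕ)) by
              have := s.isLt; have := l.isLt; omega)
            rfl ∘ₗ
          slX (l : ℕ) (n - (s : ℕ)) (s : ℕ))


end Statement2

section Filt

variable {k A H E : Type} [CommRing k] [Ring A] [Algebra k A] [Ring H] [HopfAlgebra k H]
  [Ring E] [Algebra k E]

variable (k A H E) in
/-- The filtration `F^i(X_n) = ⊕_{0 ≤ s ≤ i} E ⊗ H̄^s ⊗ Ā^{n-s} ⊗ E` of `X_n`. -/
noncomputable def FX (i n : ℕ) : Submodule k (XT k A H E n) :=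
  ⨆ (s : Fin (n + 1)) (_ : (s : ℕ) ≤ i),
    LinearMap.range (DirectSum.lof k (Fin (n + 1))
      (fun s' : Fin (n + 1) => Xc k A H E (n - (s' : ℕ)) (s' : ℕ)) s)

/-- The filtration `F^i(B_n(E))`: the sub-bimodule of `B_n(E)` generated by the tensors
`1 ⊗ x₁ ⊗ ⋯ ⊗ xₙ ⊗ 1` such that at least `n - i` of the `xⱼ` belong to `A`. -/
noncomputable def FB (S : CrossedProduct k A H E) (i n : ℕ) : Submodule k (Bch k E n) :=
  Submodule.span k
    {z : Bch k E n | ∃ (e e' : E) (xs : Fin n → E) (J : Finset (Fin n)),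
      n - i ≤ J.card ∧ (∀ j ∈ J, ∃ a : A, qbar k E (xs j) = qbar k E (S.aE a)) ∧
      z = bgen e xs e'}


end Filt

section Helpers

variable {k A H E : Type} [CommRing k] [Ring A] [Algebra k A] [Ring H] [HopfAlgebra k H]
  [Ring E] [Algebra k E]

theorem tp_zero {V : Type} [AddCommGroup V] [Module k V] :
    ∀ {n : ℕ} (j : Fin n) (v : Fin n → V), v j = 0 → tp k v = 0 := by
  intro n
  induction n with
  | zero => intro j; exact j.elim0
  | succ n ih =>
    intro j v h
    change (v 0) ⊗ₜ[k] (tp k fun i => v i.succ) = 0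
    induction j using Fin.cases with
    | zero => rw [h, TensorProduct.zero_tmul]
    | succ j => rw [ih j _ h, TensorProduct.tmul_zero]

theorem qbar_one {B : Type} [Ring B] [Algebra k B] : qbar k B 1 = 0 :=
  (Submodule.Quotient.mk_eq_zero _).2 ⟨1, by simp⟩

theorem tp_span {V W : Type} [AddCommGroup V] [Module k V] [AddCommGroup W] [Module k W]
    (q : W →ₗ[k] V) (hq : Function.Surjective q) :
    ∀ {n : ℕ} (P : Submodule k (Tpow k V n)),
      (∀ xs : Fin n → W, tp k (fun i => q (xs i)) ∈ P) → ∀ t, t ∈ P := by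
  intro n
  induction n with
  | zero =>
    intro P h t
    have h1 := P.smul_mem (show k from t) (h (fun i => i.elim0))
    have h2 : (show k from t) • (tp k (fun i : Fin 0 => q (i.elim0)) : Tpow k V 0) = t := by
      change (show k from t) * (1 : k) = t
      exact mul_one _
    rw [h2] at h1
    exact h1
  | succ n ih =>
    intro P h t
    change V ⊗[k] Tpow k V n at t
    let P' : Submodule k (V ⊗[k] Tpow k V n) := P
    change t ∈ P'
    induction t using TensorProduct.induction_on with
    | zero => exact P'.zero_mem
    | add x y hx hy => exact P'.add_mem hx hy
    | tmul v t =>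
      obtain ⟨w, rfl⟩ := hq v
      have := ih (P'.comap (TensorProduct.mk k V (Tpow k V n) (q w))) (fun xs => by
        have h3 := h (Fin.cons w xs)
        exact h3) t
      exact this

theorem xspan {r s : ℕ} (P : Submodule k (Xc k A H E r s))
    (h : ∀ e hs as e', (xgen e hs as e' : Xc k A H E r s) ∈ P) : ∀ x, x ∈ P := by
  intro x
  induction x using TensorProduct.induction_on with
  | zero => exact P.zero_mem
  | add x y hx hy => exact P.add_mem hx hy
  | tmul e x =>
    change x ∈ P.comap (TensorProduct.mk k _ _ e)
    induction x using TensorProduct.induction_on with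
    | zero => exact Submodule.zero_mem _
    | add x y hx hy => exact Submodule.add_mem _ hx hy
    | tmul t x =>
      refine tp_span (qbar k H) (Submodule.mkQ_surjective _)
        ((P.comap (TensorProduct.mk k _ _ e)).comap ((TensorProduct.mk k _ _).flip x)) ?_ t
      intro hs
      change x ∈ (P.comap (TensorProduct.mk k _ _ e)).comap (TensorProduct.mk k _ _ _)
      induction x using TensorProduct.induction_on with
      | zero => exact Submodule.zero_mem _
      | add x y hx hy => exact Submodule.add_mem _ hx hy
      | tmul t x =>
        refine tp_span (qbar k A) (Submodule.mkQ_surjective _)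
          (((P.comap (TensorProduct.mk k _ _ e)).comap (TensorProduct.mk k _ _ _)).comap
            ((TensorProduct.mk k _ _).flip x)) ?_ t
        intro as
        exact h e hs as x

theorem yspan {s : ℕ} (P : Submodule k (Yc k H E s))
    (h : ∀ e hs e', (ygen e hs e' : Yc k H E s) ∈ P) : ∀ x, x ∈ P := by
  intro x
  induction x using TensorProduct.induction_on with
  | zero => exact P.zero_mem
  | add x y hx hy => exact P.add_mem hx hy
  | tmul e x =>
    change x ∈ P.comap (TensorProduct.mk k _ _ e)
    induction x using TensorProduct.induction_on with
    | zero => exact Submodule.zero_mem _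
    | add x y hx hy => exact Submodule.add_mem _ hx hy
    | tmul t x =>
      refine tp_span (qbar k H) (Submodule.mkQ_surjective _)
        ((P.comap (TensorProduct.mk k _ _ e)).comap ((TensorProduct.mk k _ _).flip x)) ?_ t
      intro hs
      exact h e hs x

theorem srep_sum (x : H ⊗[k] (H ⊗[k] k)) :
    ∃ (N : ℕ) (u : Fin N → Fin 2 → H), (show Tpow k H 2 from x) = ∑ i, tp k (u i) := by
  have key : ∀ x y : Tpow k H 2,
      (∃ (N : ℕ) (u : Fin N → Fin 2 → H), x = ∑ i, tp k (u i)) →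
      (∃ (N : ℕ) (u : Fin N → Fin 2 → H), y = ∑ i, tp k (u i)) →
      (∃ (N : ℕ) (u : Fin N → Fin 2 → H), x + y = ∑ i, tp k (u i)) := by
    rintro x y ⟨N, u, rfl⟩ ⟨M, v, rfl⟩
    refine ⟨N + M, Fin.append u v, ?_⟩
    rw [Fin.sum_univ_add]
    simp only [Fin.append_left, Fin.append_right]
  induction x using TensorProduct.induction_on with
  | zero => exact ⟨0, fun i => i.elim0, by simp; rfl⟩
  | add x y hx hy => exact key _ _ hx hy
  | tmul v t =>
    induction t using TensorProduct.induction_on with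
    | zero => exact ⟨0, fun i => i.elim0, by simp; rfl⟩
    | add x y hx hy =>
      rw [TensorProduct.tmul_add]
      exact key _ _ hx hy
    | tmul w c =>
      refine ⟨1, fun _ => ![v, c • w], ?_⟩
      rw [Fin.sum_univ_one]
      change v ⊗ₜ[k] (w ⊗ₜ[k] c) = v ⊗ₜ[k] ((c • w) ⊗ₜ[k] (1 : k))
      rw [TensorProduct.smul_tmul, smul_eq_mul, mul_one]

theorem srep_exists (h : H) : ∃ (N : ℕ) (u : Fin N → Fin 2 → H), SRep k 1 h N u :=
  srep_sum (k := k) (H := H) (show H ⊗[k] (H ⊗[k] k) from itComul k 1 h)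

theorem itComul_one (n : ℕ) :
    itComul k n (1 : H) = tp k (fun _ : Fin (n + 1) => (1 : H)) := by
  induction n with
  | zero => rfl
  | succ n ih =>
    change (TensorProduct.map LinearMap.id (itComul k n)) (Coalgebra.comul (R := k) (1 : H)) = _
    rw [Bialgebra.comul_one, Algebra.TensorProduct.one_def]
    change (1 : H) ⊗ₜ[k] (itComul k n 1) = _
    rw [ih]
    rfl

theorem aE_mul (S : CrossedProduct k A H E) (a b : A) : S.aE a * S.aE b = S.aE (a * b) := by
  have := S.ι_mul a b 1 1 1 1 (fun _ _ => 1) (fun _ _ => 1)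
    (by simp [SRep, itComul_one]) (by simp [SRep, itComul_one])
  change S.ι (a ⊗ₜ[k] 1) * S.ι (b ⊗ₜ[k] 1) = S.ι ((a * b) ⊗ₜ[k] 1)
  rw [this]
  simp [S.one_act, (S.f_normal 1).1]

theorem aE_one (S : CrossedProduct k A H E) : S.aE (1 : A) = 1 := S.ι_one

theorem hE_one (S : CrossedProduct k A H E) : S.hE (1 : H) = 1 := S.ι_one

theorem qA (S : CrossedProduct k A H E) (x : E) (a : A)
    (h : qbar k E x = qbar k E (S.aE a)) : ∃ a' : A, x = S.aE a' := by
  have h1 := (Submodule.Quotient.eq _).1 h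
  obtain ⟨c, hc⟩ := h1
  refine ⟨a + c • 1, ?_⟩
  rw [map_add, map_smul, aE_one]
  rw [Algebra.linearMap_apply, Algebra.algebraMap_eq_smul_one] at hc
  rw [hc]; abel

/-- span of generators of `X_{rs}` with last entry in `P` -/
def xsub (P : Set E) (r s : ℕ) : Submodule k (Xc k A H E r s) :=
  Submodule.span k {z | ∃ e hs as e', e' ∈ P ∧ z = xgen e hs as e'}

theorem xgen_mem {P : Set E} {r s : ℕ} (e : E) (hs : Fin s → H) (as : Fin r → A) (e' : E)
    (h : e' ∈ P) : (xgen e hs as e' : Xc k A H E r s) ∈ xsub P r s :=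
  Submodule.subset_span ⟨e, hs, as, e', h, rfl⟩

theorem xsub_cast {P : Set E} {r r' s s' : ℕ} (hr : r = r') (hs : s = s')
    (x : Xc k A H E r s) (h : x ∈ xsub P r s) : xcast hr hs x ∈ xsub P r' s' := by
  subst hr; subst hs; exact h

theorem xsub_univ {r s : ℕ} (x : Xc k A H E r s) : x ∈ xsub (Set.univ : Set E) r s :=
  xspan _ (fun _ _ _ _ => xgen_mem _ _ _ _ trivial) x

abbrev lofX (n : ℕ) (s : Fin (n + 1)) :
    Xc k A H E (n - (s : ℕ)) (s : ℕ) →ₗ[k] XT k A H E n :=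
  DirectSum.lof k (Fin (n + 1)) (fun s' : Fin (n + 1) => Xc k A H E (n - (s' : ℕ)) (s' : ℕ)) s

/-- `F^{i-1}(X_n)` plus the part of `X_{n-i,i}` with last entry in `P` -/
def GP (P : Set E) (i n : ℕ) : Submodule k (XT k A H E n) :=
  Submodule.span k {z | ∃ (s : Fin (n + 1)) (e : E) (hs : Fin (s : ℕ) → H)
    (as : Fin (n - (s : ℕ)) → A) (e' : E), ((s : ℕ) < i ∨ ((s : ℕ) = i ∧ e' ∈ P)) ∧
    z = lofX n s (xgen e hs as e')}

theorem lof_GP_lt (P : Set E) {i n : ℕ} (s : Fin (n + 1)) (h : (s : ℕ) < i)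
    (x : Xc k A H E (n - (s : ℕ)) (s : ℕ)) : lofX n s x ∈ GP P i n := by
  refine xspan ((GP P i n).comap (lofX n s)) ?_ x
  intro e hs as e'
  exact Submodule.subset_span ⟨s, e, hs, as, e', Or.inl h, rfl⟩

theorem lof_GP (P : Set E) {i n : ℕ} (s : Fin (n + 1)) (h : (s : ℕ) ≤ i)
    (x : Xc k A H E (n - (s : ℕ)) (s : ℕ)) (hx : x ∈ xsub P _ _) : lofX n s x ∈ GP P i n := by
  have : (xsub P _ _ : Submodule k (Xc k A H E (n - (s : ℕ)) (s : ℕ))) ≤ (GP P i n).comap (lofX n s) := by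
    refine Submodule.span_le.2 ?_
    rintro _ ⟨e, hs, as, e', h', rfl⟩
    refine Submodule.subset_span ⟨s, e, hs, as, e', ?_, rfl⟩
    rcases h.lt_or_eq with h | h
    · exact Or.inl h
    · exact Or.inr ⟨h, h'⟩
  exact this hx

theorem GP_mono {P Q : Set E} (h : P ⊆ Q) (i n : ℕ) :
    (GP P i n : Submodule k (XT k A H E n)) ≤ GP Q i n := by
  refine Submodule.span_mono ?_
  rintro _ ⟨s, e, hs, as, e', h1, rfl⟩
  exact ⟨s, e, hs, as, e', h1.imp id (fun h2 => ⟨h2.1, h h2.2⟩), rfl⟩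

theorem GP_succ {P Q : Set E} (i n : ℕ) :
    (GP P i n : Submodule k (XT k A H E n)) ≤ GP Q (i + 1) n := by
  refine Submodule.span_mono ?_
  rintro _ ⟨s, e, hs, as, e', h1, rfl⟩
  exact ⟨s, e, hs, as, e', Or.inl (by omega), rfl⟩

theorem FX_eq (i n : ℕ) : FX k A H E i n = GP (Set.univ : Set E) i n := by
  apply le_antisymm
  · refine iSup_le fun s => iSup_le fun hs => ?_
    rintro _ ⟨x, rfl⟩
    exact lof_GP _ s hs x (xsub_univ x)
  · refine Submodule.span_le.2 ?_
    rintro _ ⟨s, e, hs, as, e', h1, rfl⟩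
    have : (s : ℕ) ≤ i := by omega
    exact (le_iSup_of_le s (le_iSup_of_le this le_rfl) :
      LinearMap.range (lofX n s) ≤ FX k A H E i n) ⟨_, rfl⟩

theorem rX_xgen (c e : E) {r s : ℕ} (hs : Fin s → H) (as : Fin r → A) (e' : E) :
    rX c (xgen e hs as e' : Xc k A H E r s) = xgen e hs as (e' * c) := rfl

theorem rT_xgen (c e : E) {n : ℕ} (s : Fin (n + 1)) (hs : Fin (s : ℕ) → H)
    (as : Fin (n - (s : ℕ)) → A) (e' : E) :
    rT c n (lofX n s (xgen e hs as e')) = (lofX n s (xgen e hs as (e' * c)) : XT k A H E n) := by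
  rw [rT, DirectSum.toModule_lof]
  rfl

theorem rT_GP {P Q : Set E} (c : E) (h : ∀ x ∈ P, x * c ∈ Q) (i n : ℕ) (x : XT k A H E n)
    (hx : x ∈ GP P i n) : rT c n x ∈ GP Q i n := by
  have : GP P i n ≤ (GP Q i n).comap (rT c n : XT k A H E n →ₗ[k] _) := by
    refine Submodule.span_le.2 ?_
    rintro _ ⟨s, e, hs, as, e', h1, rfl⟩
    rw [SetLike.mem_coe, Submodule.mem_comap]
    rw [rT_xgen]
    exact Submodule.subset_span ⟨s, e, hs, as, _, h1.imp id (fun h2 => ⟨h2.1, h _ h2.2⟩), rfl⟩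
  exact this hx

abbrev rA (S : CrossedProduct k A H E) : Set E := Set.range S.aE

theorem one_rA (S : CrossedProduct k A H E) : ({1} : Set E) ⊆ rA S := by
  rintro _ rfl
  exact ⟨1, aE_one S⟩

/-- `B`-side analogue of `GP`. -/
def BP (S : CrossedProduct k A H E) (P : Set E) (i n : ℕ) : Submodule k (Bch k E n) :=
  Submodule.span k {z | ∃ (e e' : E) (xs : Fin n → E) (J : Finset (Fin n)),
    (∀ j ∈ J, xs j ∈ rA S) ∧ (n < i + J.card ∨ (n ≤ i + J.card ∧ e' ∈ P)) ∧ z = bgen e xs e'}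

/-- generators with last entry in `P`. -/
def B1 (S : CrossedProduct k A H E) (P : Set E) (i n : ℕ) : Submodule k (Bch k E n) :=
  Submodule.span k {z | ∃ (e e' : E) (xs : Fin n → E) (J : Finset (Fin n)),
    (∀ j ∈ J, xs j ∈ rA S) ∧ n ≤ i + J.card ∧ e' ∈ P ∧ z = bgen e xs e'}

theorem FB_eq (S : CrossedProduct k A H E) (i n : ℕ) : FB S i n = B1 S Set.univ i n := by
  apply le_antisymm
  · refine Submodule.span_mono ?_
    rintro _ ⟨e, e', xs, J, h1, h2, rfl⟩
    refine ⟨e, e', xs, J, fun j hj => ?_, by omega, trivial, rfl⟩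
    obtain ⟨a, ha⟩ := h2 j hj
    obtain ⟨a', ha'⟩ := qA S _ a ha
    exact ⟨a', ha'.symm⟩
  · refine Submodule.span_mono ?_
    rintro _ ⟨e, e', xs, J, h1, h2, -, rfl⟩
    refine ⟨e, e', xs, J, by omega, fun j hj => ?_, rfl⟩
    obtain ⟨a, ha⟩ := h1 j hj
    exact ⟨a, by rw [ha]⟩

theorem B1_le_BP (S : CrossedProduct k A H E) {P Q : Set E} (h : P ⊆ Q) (i n : ℕ) :
    B1 S P i n ≤ BP S Q i n := by
  refine Submodule.span_mono ?_
  rintro _ ⟨e, e', xs, J, h1, h2, h3, rfl⟩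
  exact ⟨e, e', xs, J, h1, Or.inr ⟨h2, h h3⟩, rfl⟩

theorem B1_le_BP_succ (S : CrossedProduct k A H E) {P Q : Set E} (i n : ℕ) :
    B1 S P i n ≤ BP S Q (i + 1) n := by
  refine Submodule.span_mono ?_
  rintro _ ⟨e, e', xs, J, h1, h2, h3, rfl⟩
  exact ⟨e, e', xs, J, h1, Or.inl (by omega), rfl⟩

theorem B1_mono (S : CrossedProduct k A H E) {P : Set E} {i j : ℕ} (h : i ≤ j) (n : ℕ) :
    B1 S P i n ≤ B1 S P j n := by
  refine Submodule.span_mono ?_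
  rintro _ ⟨e, e', xs, J, h1, h2, h3, rfl⟩
  exact ⟨e, e', xs, J, h1, by omega, h3, rfl⟩

theorem rB_bgen (c e : E) {n : ℕ} (xs : Fin n → E) (e' : E) :
    rB c (bgen e xs e' : Bch k E n) = bgen e xs (e' * c) := rfl

theorem rB_B1 (S : CrossedProduct k A H E) {P Q : Set E} (c : E) (h : ∀ x ∈ P, x * c ∈ Q)
    (i n : ℕ) (x : Bch k E n) (hx : x ∈ B1 S P i n) : rB c x ∈ B1 S Q i n := by
  have : B1 S P i n ≤ (B1 S Q i n).comap (rB c) := by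
    refine Submodule.span_le.2 ?_
    rintro _ ⟨e, e', xs, J, h1, h2, h3, rfl⟩
    exact Submodule.subset_span ⟨e, e' * c, xs, J, h1, h2, h _ h3, rfl⟩
  exact this hx

/-- `ξ` maps `BP` to `B1`. -/
theorem xi_mem (S : CrossedProduct k A H E)
    (xi : ∀ n : ℕ, Bch k E n →ₗ[k] Bch k E (n + 1)) (hxi : IsXi k E xi) (i n : ℕ)
    (x : Bch k E n) (hx : x ∈ BP S (rA S) i n) : xi n x ∈ B1 S {1} i (n + 1) := by
  have : BP S (rA S) i n ≤ (B1 S {1} i (n + 1)).comap (xi n) := by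
    refine Submodule.span_le.2 ?_
    rintro _ ⟨e, e', xs, J, h1, h2, rfl⟩
    rw [SetLike.mem_coe, Submodule.mem_comap]
    rw [hxi]
    refine zsmul_mem (Submodule.subset_span ?_) _
    rcases h2 with h2 | ⟨h2, h3⟩
    · refine ⟨e, 1, Fin.snoc xs e', J.map Fin.castSuccEmb, ?_, by rw [Finset.card_map]; omega,
        rfl, rfl⟩
      intro j hj
      obtain ⟨j, hj', rfl⟩ := Finset.mem_map.1 hj
      simpa using h1 j hj'
    · refine ⟨e, 1, Fin.snoc xs e', insert (Fin.last n) (J.map Fin.castSuccEmb), ?_, ?_,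
        rfl, rfl⟩
      · intro j hj
        rcases Finset.mem_insert.1 hj with rfl | hj
        · simpa using h3
        · obtain ⟨j, hj', rfl⟩ := Finset.mem_map.1 hj
          simpa using h1 j hj'
      · rw [Finset.card_insert_of_notMem, Finset.card_map]
        · omega
        · simp [Fin.castSucc_ne_last]
  exact this hx

theorem card_mulAt {n : ℕ} (Q : Fin (n + 1) → Prop) (J : Finset (Fin (n + 1)))
    (hJ : ∀ j ∈ J, Q j) (i : Fin n) : ∃ J' : Finset (Fin n), J.card ≤ J'.card + 1 ∧
      ∀ j ∈ J', if (j : ℕ) < (i : ℕ) then Q j.castSucc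
        else if (j : ℕ) = (i : ℕ) then Q j.castSucc ∧ Q j.succ else Q j.succ := by
  classical
  refine ⟨Finset.univ.filter (fun j => if (j : ℕ) < (i : ℕ) then j.castSucc ∈ J
        else if (j : ℕ) = (i : ℕ) then j.castSucc ∈ J ∧ j.succ ∈ J else j.succ ∈ J), ?_, ?_⟩
  · set J' := Finset.univ.filter (fun j : Fin n => if (j : ℕ) < (i : ℕ) then j.castSucc ∈ J
        else if (j : ℕ) = (i : ℕ) then j.castSucc ∈ J ∧ j.succ ∈ J else j.succ ∈ J) with hJ'
    by_cases hb : i.castSucc ∈ J ∧ i.succ ∈ J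
    · have : J ⊆ insert i.castSucc (J'.image i.castSucc.succAbove) := by
        intro j hj
        by_cases hji : j = i.castSucc
        · simp [hji]
        · obtain ⟨m, rfl⟩ := Fin.exists_succAbove_eq hji
          refine Finset.mem_insert_of_mem (Finset.mem_image_of_mem _ ?_)
          rw [hJ', Finset.mem_filter]
          refine ⟨Finset.mem_univ _, ?_⟩
          by_cases h1 : (m : ℕ) < i
          · rw [if_pos h1]
            rwa [Fin.succAbove_of_castSucc_lt _ _ (show (m : ℕ) < i from h1)] at hj
          · rw [if_neg h1]
            by_cases h2 : (m : ℕ) = i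
            · rw [if_pos h2]
              have : m = i := Fin.ext h2
              rw [this]; exact hb
            · rw [if_neg h2]
              rwa [Fin.succAbove_of_le_castSucc _ _ (show (i : ℕ) ≤ m from Nat.le_of_not_lt h1)] at hj
      have h3 := (Finset.card_le_card this).trans (Finset.card_insert_le _ _)
      have h4 := Finset.card_image_le (s := J') (f := i.castSucc.succAbove)
      omega
    · have : ∃ p, J.erase p ⊆ J'.image i.castSucc.succAbove := by
        refine ⟨if i.castSucc ∈ J then i.castSucc else i.succ, ?_⟩
        intro j hj
        rw [Finset.mem_erase] at hj
        obtain ⟨hj1, hj⟩ := hj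
        have hc : j ≠ i.castSucc := by
          rintro rfl
          rw [if_pos hj] at hj1
          exact hj1 rfl
        have hs : j ≠ i.succ := by
          rintro rfl
          have : i.castSucc ∉ J := fun h => hb ⟨h, hj⟩
          rw [if_neg this] at hj1
          exact hj1 rfl
        obtain ⟨m, rfl⟩ := Fin.exists_succAbove_eq hc
        refine Finset.mem_image_of_mem _ ?_
        rw [hJ', Finset.mem_filter]
        refine ⟨Finset.mem_univ _, ?_⟩
        by_cases h1 : (m : ℕ) < i
        · rw [if_pos h1]
          rwa [Fin.succAbove_of_castSucc_lt _ _ (show (m : ℕ) < i from h1)] at hj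
        · rw [if_neg h1]
          rw [Fin.succAbove_of_le_castSucc _ _ (show (i : ℕ) ≤ m from Nat.le_of_not_lt h1)] at hj hs
          by_cases h2 : (m : ℕ) = i
          · exact absurd (congrArg Fin.succ (Fin.ext h2)) hs
          · rwa [if_neg h2]
      obtain ⟨p, hp⟩ := this
      have h3 := Finset.card_le_card hp
      have h4 := Finset.card_image_le (s := J') (f := i.castSucc.succAbove)
      have h5 := Finset.pred_card_le_card_erase (s := J) (a := p)
      omega
  · intro j hj
    rw [Finset.mem_filter] at hj
    have := hj.2
    split_ifs at this ⊢
    · exact hJ _ this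
    · exact ⟨hJ _ this.1, hJ _ this.2⟩
    · exact hJ _ this

theorem card_succ {n : ℕ} (J : Finset (Fin (n + 1))) : ∃ J' : Finset (Fin n),
    J.card ≤ J'.card + 1 ∧ ∀ j ∈ J', j.succ ∈ J := by
  classical
  refine ⟨Finset.univ.filter (fun j => j.succ ∈ J), ?_, fun j hj => (Finset.mem_filter.1 hj).2⟩
  have : J.erase 0 ⊆ (Finset.univ.filter (fun j : Fin n => j.succ ∈ J)).image Fin.succ := by
    intro j hj
    rw [Finset.mem_erase] at hj
    obtain ⟨m, rfl⟩ := Fin.exists_succ_eq.2 hj.1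
    exact Finset.mem_image_of_mem _ (by simpa using hj.2)
  have h3 := Finset.card_le_card this
  have h4 := Finset.card_image_le (s := Finset.univ.filter (fun j : Fin n => j.succ ∈ J))
    (f := Fin.succ)
  have h5 := Finset.pred_card_le_card_erase (s := J) (a := 0)
  omega

theorem card_castSucc {n : ℕ} (J : Finset (Fin (n + 1))) : ∃ J' : Finset (Fin n),
    J.card ≤ J'.card + 1 ∧ (Fin.last n ∉ J → J.card ≤ J'.card) ∧ ∀ j ∈ J', j.castSucc ∈ J := by
  classical
  refine ⟨Finset.univ.filter (fun j => j.castSucc ∈ J), ?_⟩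
  have : J.erase (Fin.last n) ⊆
      (Finset.univ.filter (fun j : Fin n => j.castSucc ∈ J)).image Fin.castSucc := by
    intro j hj
    rw [Finset.mem_erase] at hj
    obtain ⟨m, rfl⟩ := Fin.exists_castSucc_eq.2 hj.1
    exact Finset.mem_image_of_mem _ (by simpa using hj.2)
  have h3 := Finset.card_le_card this
  have h4 := Finset.card_image_le (s := Finset.univ.filter (fun j : Fin n => j.castSucc ∈ J))
    (f := Fin.castSucc)
  have h5 := Finset.pred_card_le_card_erase (s := J) (a := Fin.last n)
  refine ⟨by omega, fun h => ?_, fun j hj => (Finset.mem_filter.1 hj).2⟩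
  rw [Finset.erase_eq_of_notMem h] at h3
  omega

theorem bp_mem (S : CrossedProduct k A H E)
    (bp : ∀ n : ℕ, Bch k E (n + 1) →ₗ[k] Bch k E n) (hbp : IsBp k E bp) (i n : ℕ)
    (e : E) (xs : Fin (n + 1) → E) (J : Finset (Fin (n + 1))) (hJ : ∀ j ∈ J, xs j ∈ rA S)
    (hc : n + 1 ≤ i + J.card) : bp n (bgen e xs 1) ∈ BP S (rA S) i n := by
  rw [hbp]
  refine Submodule.add_mem _ (Submodule.add_mem _ ?_ (Submodule.sum_mem _ ?_)) (zsmul_mem ?_ _)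
  · obtain ⟨J', h1, h2⟩ := card_succ J
    exact Submodule.subset_span ⟨_, _, _, J', fun j hj => hJ _ (h2 j hj),
      Or.inr ⟨by omega, one_rA S rfl⟩, rfl⟩
  · intro m _
    refine zsmul_mem ?_ _
    obtain ⟨J', h1, h2⟩ := card_mulAt (fun j => xs j ∈ rA S) J hJ m
    refine Submodule.subset_span ⟨_, _, _, J', fun j hj => ?_,
      Or.inr ⟨by omega, one_rA S rfl⟩, rfl⟩
    have := h2 j hj
    unfold mulAt
    split_ifs at this ⊢
    · exact this
    · obtain ⟨⟨a, ha⟩, ⟨b, hb⟩⟩ := this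
      rw [← ha, ← hb, aE_mul]
      exact ⟨_, rfl⟩
    · exact this
  · obtain ⟨J', h1, h2, h3⟩ := card_castSucc J
    refine Submodule.subset_span ⟨_, _, _, J', fun j hj => hJ _ (h3 j hj), ?_, rfl⟩
    by_cases hl : Fin.last n ∈ J
    · exact Or.inr ⟨by omega, by rw [mul_one]; exact hJ _ hl⟩
    · have := h2 hl
      exact Or.inl (by omega)

theorem d0_mem (S : CrossedProduct k A H E) (R : ResData k A H E S) (r s : ℕ) (hr : 0 < r)
    (e : E) (hs : Fin s → H) (as : Fin r → A) :
    R.dl 0 r s (xgen e hs as 1) ∈ xsub (rA S) (r + 0 - 1) (s - 0) := by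
  obtain ⟨r, rfl⟩ : ∃ r', r = r' + 1 := ⟨r - 1, by omega⟩
  obtain ⟨t, rfl⟩ := S.ι.surjective e
  let T : (A ⊗[k] H) →ₗ[k] Xc k A H E (r + 1) s :=
    (TensorProduct.mk k _ _).flip (tp k (fun i => qbar k H (hs i)) ⊗ₜ[k]
      (tp k (fun i => qbar k A (as i)) ⊗ₜ[k] (1 : E))) ∘ₗ S.ι.toLinearMap
  change t ∈ (xsub (rA S) (r + 1 + 0 - 1) (s - 0)).comap (R.dl 0 (r + 1) s ∘ₗ T)
  induction t using TensorProduct.induction_on with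
  | zero => exact Submodule.zero_mem _
  | add x y hx hy => exact Submodule.add_mem _ hx hy
  | tmul a₀ h₀ =>
    change R.dl 0 (r + 1) s (xgen (S.ι (a₀ ⊗ₜ[k] h₀)) hs as 1) ∈
      xsub (rA S) (r + 1 + 0 - 1) (s - 0)
    choose Nv v hv using fun i => srep_exists (k := k) ((Fin.cons h₀ hs : Fin (s + 1) → H) i)
    rw [← S.ι_one, R.d0_eq r s a₀ h₀ hs as 1 1 Nv v hv]
    have h1 : S.ι ((1 : A) ⊗ₜ[k] (1 : H)) ∈ rA S := ⟨1, rfl⟩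
    refine Submodule.add_mem (xsub (rA S) r s) (Submodule.add_mem _ (Submodule.sum_mem _ ?_)
      (Submodule.sum_mem _ ?_)) (zsmul_mem ?_ _)
    · intro c _
      exact xgen_mem _ _ _ _ h1
    · intro c _
      exact zsmul_mem (xgen_mem _ _ _ _ h1) _
    · exact xgen_mem _ _ _ _ ⟨_, rfl⟩

theorem dT_mem (S : CrossedProduct k A H E) (R : ResData k A H E S) (n : ℕ) (s : Fin (n + 2))
    (e : E) (hs : Fin (s : ℕ) → H) (as : Fin (n + 1 - (s : ℕ)) → A) :
    dT R n (lofX (n + 1) s (xgen e hs as 1)) ∈ GP (rA S) s n := by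
  rw [dT, DirectSum.toModule_lof, LinearMap.sum_apply]
  refine Submodule.sum_mem _ ?_
  rintro ⟨l, hl⟩ _
  split_ifs with h
  · change lofX n _ (xcast _ _ (R.dl l _ _ _)) ∈ GP (rA S) s n
    by_cases hl0 : l = 0
    · subst hl0
      refine lof_GP _ _ (by simp) _ (xsub_cast _ _ _ ?_)
      exact d0_mem S R _ _ (by simpa using h) e hs as
    · refine lof_GP_lt _ _ ?_ _
      change (s : ℕ) - l < s
      omega
  · exact Submodule.zero_mem _

theorem mu_mem (S : CrossedProduct k A H E) (R : ResData k A H E S)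
    (sY : ∀ s : ℕ, Yc k H E s →ₗ[k] Yc k H E (s + 1))
    (hsY : ∀ (s : ℕ) (e : E) (hs : Fin s → H) (h : H),
      sY s (ygen e hs h) = ((-1 : ℤ) ^ s) • ygen e (Fin.snoc hs h) 1)
    (s : ℕ) (x : Xc k A H E 0 s) (hx : x ∈ xsub (rA S) 0 s) : sY s (R.mu s x) = 0 := by
  have : xsub (rA S) 0 s ≤ LinearMap.ker (sY s ∘ₗ R.mu s) := by
    refine Submodule.span_le.2 ?_
    rintro _ ⟨e, hs, as, _, ⟨b, rfl⟩, rfl⟩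
    obtain rfl : as = fun i : Fin 0 => i.elim0 := by funext i; exact i.elim0
    obtain ⟨t, rfl⟩ := S.ι.surjective e
    let T : (A ⊗[k] H) →ₗ[k] Xc k A H E 0 s :=
      (TensorProduct.mk k _ _).flip (tp k (fun i => qbar k H (hs i)) ⊗ₜ[k]
        (tp k (fun i : Fin 0 => qbar k A (i.elim0)) ⊗ₜ[k] (S.aE b : E))) ∘ₗ S.ι.toLinearMap
    change t ∈ (LinearMap.ker (sY s ∘ₗ R.mu s)).comap T
    induction t using TensorProduct.induction_on with
    | zero => exact Submodule.zero_mem _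
    | add x y hx hy => exact Submodule.add_mem _ hx hy
    | tmul a₀ h₀ =>
      change sY s (R.mu s (xgen (S.ι (a₀ ⊗ₜ[k] h₀)) hs (fun i : Fin 0 => i.elim0)
        (S.ι (b ⊗ₜ[k] 1)))) = 0
      choose Nv v hv using fun i => srep_exists (k := k) ((Fin.cons h₀ hs : Fin (s + 1) → H) i)
      rw [R.mu_eq s a₀ h₀ hs b 1 Nv v hv, map_sum]
      refine Finset.sum_eq_zero fun c _ => ?_
      rw [hsY, ygen, tp_zero (Fin.last s)]
      · simp
      · simp only [Fin.snoc_last]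
        exact qbar_one
  exact this hx

theorem sY_mem (S : CrossedProduct k A H E) (R : ResData k A H E S)
    (sY : ∀ s : ℕ, Yc k H E s →ₗ[k] Yc k H E (s + 1))
    (hsY : ∀ (s : ℕ) (e : E) (hs : Fin s → H) (h : H),
      sY s (ygen e hs h) = ((-1 : ℤ) ^ s) • ygen e (Fin.snoc hs h) 1)
    (s : ℕ) (y : Yc k H E s) : R.sig0 (s + 1) (sY s y) ∈ xsub ({1} : Set E) 0 (s + 1) := by
  refine yspan ((xsub ({1} : Set E) 0 (s + 1)).comap (R.sig0 (s + 1) ∘ₗ sY s)) ?_ y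
  intro e hs h
  rw [Submodule.mem_comap, LinearMap.comp_apply]
  rw [hsY, map_zsmul, R.sig0_eq, hE_one]
  refine zsmul_mem ?_ _
  exact Submodule.subset_span ⟨_, _, _, _, Set.mem_singleton _, rfl⟩

theorem sig_mem (S : CrossedProduct k A H E) (R : ResData k A H E S) (r s : ℕ)
    (x : Xc k A H E r s) (hx : x ∈ xsub (rA S) r s) :
    R.sig r s x ∈ xsub ({1} : Set E) (r + 1) s := by
  have : xsub (rA S) r s ≤ (xsub ({1} : Set E) (r + 1) s).comap (R.sig r s) := by
    refine Submodule.span_le.2 ?_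
    rintro _ ⟨e, hs, as, _, ⟨b, rfl⟩, rfl⟩
    change R.sig r s (xgen e hs as (S.ι (b ⊗ₜ[k] 1))) ∈ xsub ({1} : Set E) (r + 1) s
    rw [R.sig_eq, hE_one]
    refine zsmul_mem ?_ _
    exact Submodule.subset_span ⟨_, _, _, _, Set.mem_singleton _, rfl⟩
  exact this hx

theorem sbar_mem (S : CrossedProduct k A H E) (R : ResData k A H E S)
    (sY : ∀ s : ℕ, Yc k H E s →ₗ[k] Yc k H E (s + 1))
    (hsY : ∀ (s : ℕ) (e : E) (hs : Fin s → H) (h : H),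
      sY s (ygen e hs h) = ((-1 : ℤ) ^ s) • ygen e (Fin.snoc hs h) 1)
    (slY : ∀ l s : ℕ, Yc k H E s →ₗ[k] Xc k A H E l (s - l))
    (slX : ∀ l r s : ℕ, Xc k A H E r s →ₗ[k] Xc k A H E (r + l + 1) (s - l))
    (hslY0 : ∀ s : ℕ, slY 0 s = R.sig0 s)
    (hslX0 : ∀ r s : ℕ, slX 0 r s = R.sig r s) (i n : ℕ) (x : XT k A H E n)
    (hx : x ∈ GP (rA S) i n) : sbar R slY slX sY n x ∈ GP ({1} : Set E) i (n + 1) := by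
  have : GP (rA S) i n ≤ (GP ({1} : Set E) i (n + 1)).comap (sbar R slY slX sY n) := by
    refine Submodule.span_le.2 ?_
    rintro _ ⟨s, e, hs, as, e', h1, rfl⟩
    rw [SetLike.mem_coe, Submodule.mem_comap]
    rw [sbar, LinearMap.add_apply, LinearMap.neg_apply]
    refine Submodule.add_mem _ (Submodule.neg_mem _ ?_) ?_
    · change (∑ l : Fin (n + 2), _ : _ →ₗ[k] _) (sY n (muT R n _)) ∈
        GP ({1} : Set E) i (n + 1)
      rw [muT, DirectSum.toModule_lof]
      split_ifs with hsn
      · rcases h1 with h1 | ⟨h1, h2⟩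
        · rw [LinearMap.sum_apply]
          refine Submodule.sum_mem _ ?_
          rintro ⟨l, hl⟩ _
          change lofX (n + 1) _ (xcast _ _ (slY l (n + 1) _)) ∈ GP ({1} : Set E) i (n + 1)
          by_cases hl0 : l = 0
          · subst hl0
            refine lof_GP _ _ (by simp; omega) _ (xsub_cast _ _ _ ?_)
            rw [hslY0]
            exact sY_mem S R sY hsY _ _
          · refine lof_GP_lt _ _ ?_ _
            change n + 1 - l < i
            omega
        · rw [LinearMap.comp_apply, mu_mem S R sY hsY, map_zero]
          · exact Submodule.zero_mem _
          · exact xsub_cast _ _ _ (xgen_mem _ _ _ _ h2)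
      · rw [LinearMap.zero_apply, map_zero, map_zero]
        exact Submodule.zero_mem _
    · rw [DirectSum.toModule_lof, LinearMap.sum_apply]
      refine Submodule.sum_mem _ ?_
      rintro ⟨l, hl⟩ _
      change lofX (n + 1) _ (xcast _ _ (slX l _ _ _)) ∈ GP ({1} : Set E) i (n + 1)
      by_cases hlt : (s : ℕ) - l < i
      · exact lof_GP_lt _ _ hlt _
      · obtain rfl : l = 0 := by omega
        refine lof_GP _ _ (by simp; omega) _ (xsub_cast _ _ _ ?_)
        rw [hslX0]
        exact sig_mem S R _ _ _ (xgen_mem _ _ _ _ (by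
          rcases h1 with h1 | h1
          · exact absurd h1 (by simpa using hlt)
          · exact h1.2))
  exact this hx

end Helpers

section Statement5

variable {k A H E : Type} [CommRing k] [Ring A] [Algebra k A] [Ring H] [HopfAlgebra k H]
  [Ring E] [Algebra k E]

/-- **Proposition 1.2.2: the comparison maps preserve the filtrations.**
The maps `φ_*`, `ψ_*` and `ω_{*+1}` of Proposition 1.2.1 preserve the filtrations:
`φ_n(F^i(X_n)) ⊆ F^i(B_n(E))`, `ψ_n(F^i(B_n(E))) ⊆ F^i(X_n)`, and
`ω_{n+1}(F^i(B_n(E))) ⊆ F^i(B_{n+1}(E))` for all `n ≥ 0` and `i ≥ 0`. -/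
theorem comparison_maps_preserve_filtrations
    (S : CrossedProduct k A H E) (R : ResData k A H E S)
    (bp : ∀ n : ℕ, Bch k E (n + 1) →ₗ[k] Bch k E n) (hbp : IsBp k E bp)
    (xi : ∀ n : ℕ, Bch k E n →ₗ[k] Bch k E (n + 1)) (hxi : IsXi k E xi)
    (sY : ∀ s : ℕ, Yc k H E s →ₗ[k] Yc k H E (s + 1))
    (hsY : ∀ (s : ℕ) (e : E) (hs : Fin s → H) (h : H),
      sY s (ygen e hs h) = ((-1 : ℤ) ^ s) • ygen e (Fin.snoc hs h) 1)
    (slY : ∀ l s : ℕ, Yc k H E s →ₗ[k] Xc k A H E l (s - l))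
    (slX : ∀ l r s : ℕ, Xc k A H E r s →ₗ[k] Xc k A H E (r + l + 1) (s - l))
    (hslY0 : ∀ s : ℕ, slY 0 s = R.sig0 s)
    (hslX0 : ∀ r s : ℕ, slX 0 r s = R.sig r s)
    (hslY : ∀ (l s : ℕ) (hl : 1 ≤ l) (hls : l ≤ s),
      slY l s = - ∑ i : Fin l,
        xcast (show (l - 1) + 1 = l by omega) rfl ∘ₗ
          R.sig (l - 1) (s - l) ∘ₗ
          xcast
            (show (i : ℕ) + (l - (i : ℕ)) - 1 = l - 1 by have := i.isLt; omega)
            (show (s - (i : ℕ)) - (l - (i : ℕ)) = s - l by have := i.isLt; omega) ∘ₗ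
          R.dl (l - (i : ℕ)) (i : ℕ) (s - (i : ℕ)) ∘ₗ slY (i : ℕ) s)
    (hslX : ∀ (l r s : ℕ) (hl : 1 ≤ l) (hls : l ≤ s),
      slX l r s = - ∑ i : Fin l,
        R.sig (r + l) (s - l) ∘ₗ
          xcast
            (show (r + (i : ℕ) + 1) + (l - (i : ℕ)) - 1 = r + l by have := i.isLt; omega)
            (show (s - (i : ℕ)) - (l - (i : ℕ)) = s - l by have := i.isLt; omega) ∘ₗ
          R.dl (l - (i : ℕ)) (r + (i : ℕ) + 1) (s - (i : ℕ)) ∘ₗ slX (i : ℕ) r s)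
    (phi : ∀ n : ℕ, XT k A H E n →ₗ[k] Bch k E n)
    (psi : ∀ n : ℕ, Bch k E n →ₗ[k] XT k A H E n)
    (hphi0 : ∀ e e' : E,
      phi 0 (DirectSum.lof k (Fin 1) (fun s' : Fin 1 => Xc k A H E (0 - (s' : ℕ)) (s' : ℕ)) 0
        (xgen e (fun i : Fin 0 => i.elim0) (fun i : Fin 0 => i.elim0) e')) =
      bgen e (fun i : Fin 0 => i.elim0) e')
    (hpsi0 : ∀ e e' : E,
      psi 0 (bgen e (fun i : Fin 0 => i.elim0) e') =
        DirectSum.lof k (Fin 1) (fun s' : Fin 1 => Xc k A H E (0 - (s' : ℕ)) (s' : ℕ)) 0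
          (xgen e (fun i : Fin 0 => i.elim0) (fun i : Fin 0 => i.elim0) e'))
    (hphiS : ∀ (n : ℕ) (s : Fin (n + 2)) (e : E) (hs : Fin (s : ℕ) → H)
      (as : Fin (n + 1 - (s : ℕ)) → A),
      phi (n + 1) (DirectSum.lof k (Fin (n + 2))
          (fun s' : Fin (n + 2) => Xc k A H E (n + 1 - (s' : ℕ)) (s' : ℕ)) s
          (xgen e hs as (1 : E))) =
        xi n (phi n (dT R n (DirectSum.lof k (Fin (n + 2))
          (fun s' : Fin (n + 2) => Xc k A H E (n + 1 - (s' : ℕ)) (s' : ℕ)) s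
          (xgen e hs as (1 : E))))))
    (hpsiS : ∀ (n : ℕ) (e : E) (xs : Fin (n + 1) → E),
      psi (n + 1) (bgen e xs (1 : E)) =
        sbar R slY slX sY n (psi n (bp n (bgen e xs (1 : E)))))
    (hphiR : ∀ (n : ℕ) (e : E), phi n ∘ₗ rT e n = rB e ∘ₗ phi n)
    (hpsiR : ∀ (n : ℕ) (e : E), psi n ∘ₗ rB e = rT e n ∘ₗ psi n)
    (om : ∀ n : ℕ, Bch k E n →ₗ[k] Bch k E (n + 1))
    (hom0 : om 0 = 0)
    (homS : ∀ (n : ℕ) (e : E) (xs : Fin (n + 1) → E),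
      om (n + 1) (bgen e xs (1 : E)) =
        xi (n + 1) (phi (n + 1) (psi (n + 1) (bgen e xs (1 : E)))
          - bgen e xs (1 : E) - om n (bp n (bgen e xs (1 : E)))))
    (homR : ∀ (n : ℕ) (e : E), om n ∘ₗ rB e = rB e ∘ₗ om n) :
    (∀ (i n : ℕ) (x : XT k A H E n), x ∈ FX k A H E i n → phi n x ∈ FB S i n) ∧
    (∀ (i n : ℕ) (y : Bch k E n), y ∈ FB S i n → psi n y ∈ FX k A H E i n) ∧
    (∀ (i n : ℕ) (y : Bch k E n), y ∈ FB S i n → om n y ∈ FB S i (n + 1)) := by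
  have mul1 : ∀ c : E, ∀ x ∈ ({1} : Set E), x * c ∈ (Set.univ : Set E) := fun _ _ _ => trivial
  have mulA : ∀ c ∈ rA S, ∀ x ∈ ({1} : Set E), x * c ∈ rA S := by
    rintro c hc _ rfl
    rwa [one_mul]
  have mulU : ∀ c : E, ∀ x ∈ (Set.univ : Set E), x * c ∈ (Set.univ : Set E) :=
    fun _ _ _ => trivial
  -- right linearity, pointwise
  have phiR : ∀ (n : ℕ) (s : Fin (n + 1)) (e : E) (hs : Fin (s : ℕ) → H)
      (as : Fin (n - (s : ℕ)) → A) (e' : E), phi n (lofX n s (xgen e hs as e')) =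
        rB e' (phi n (lofX n s (xgen e hs as 1))) := by
    intro n s e hs as e'
    have := LinearMap.congr_fun (hphiR n e') (lofX n s (xgen e hs as 1))
    rw [LinearMap.comp_apply, LinearMap.comp_apply, rT_xgen, one_mul] at this
    exact this
  have psiR : ∀ (n : ℕ) (e : E) (xs : Fin n → E) (e' : E), psi n (bgen e xs e') =
        rT e' n (psi n (bgen e xs 1)) := by
    intro n e xs e'
    have := LinearMap.congr_fun (hpsiR n e') (bgen e xs 1)
    rw [LinearMap.comp_apply, LinearMap.comp_apply, rB_bgen, one_mul] at this
    exact this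
  have omR : ∀ (n : ℕ) (e : E) (xs : Fin n → E) (e' : E), om n (bgen e xs e') =
        rB e' (om n (bgen e xs 1)) := by
    intro n e xs e'
    have := LinearMap.congr_fun (homR n e') (bgen e xs 1)
    rw [LinearMap.comp_apply, LinearMap.comp_apply, rB_bgen, one_mul] at this
    exact this
  -- extension to `GP` and `BP`
  have phiG : ∀ n : ℕ, (∀ (s : Fin (n + 1)) (e : E) (hs : Fin (s : ℕ) → H)
      (as : Fin (n - (s : ℕ)) → A), phi n (lofX n s (xgen e hs as 1)) ∈ B1 S {1} s n) →
      ∀ (i : ℕ) (x : XT k A H E n), x ∈ GP (rA S) i n → phi n x ∈ BP S (rA S) i n := by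
    intro n hn i x hx
    have : GP (rA S) i n ≤ (BP S (rA S) i n).comap (phi n) := by
      refine Submodule.span_le.2 ?_
      rintro _ ⟨s, e, hs, as, e', h1, rfl⟩
      rw [SetLike.mem_coe, Submodule.mem_comap]
      rw [phiR]
      rcases h1 with h1 | ⟨h1, h2⟩
      · obtain ⟨i, rfl⟩ : ∃ i', i = i' + 1 := ⟨i - 1, by omega⟩
        refine B1_le_BP_succ S (P := Set.univ) i n (rB_B1 S e' (mul1 e') _ _ _ ?_)
        exact B1_mono S (by omega) n (hn s e hs as)
      · subst h1
        exact B1_le_BP S subset_rfl _ n (rB_B1 S e' (mulA e' h2) _ _ _ (hn s e hs as))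
    exact this hx
  have phi1 : ∀ (n : ℕ) (s : Fin (n + 1)) (e : E) (hs : Fin (s : ℕ) → H)
      (as : Fin (n - (s : ℕ)) → A), phi n (lofX n s (xgen e hs as 1)) ∈ B1 S {1} s n := by
    intro n
    induction n with
    | zero =>
      intro s e hs as
      obtain rfl : s = 0 := Fin.ext (by omega)
      obtain rfl : hs = fun i : Fin 0 => i.elim0 := by funext i; exact Fin.elim0 i
      obtain rfl : as = fun i : Fin 0 => i.elim0 := by funext i; exact Fin.elim0 i
      have h := hphi0 e 1
      refine Eq.mpr (congrArg (· ∈ B1 S {1} _ 0) h) ?_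
      exact Submodule.subset_span ⟨e, 1, _, ∅, by simp, by simp, rfl, rfl⟩
    | succ n ih =>
      intro s e hs as
      refine Eq.mpr (congrArg (· ∈ B1 S {1} _ (n + 1)) (hphiS n s e hs as)) ?_
      exact xi_mem S xi hxi _ _ _ (phiG n ih _ _ (dT_mem S R n s e hs as))
  have psiG : ∀ n : ℕ, (∀ (i : ℕ) (e : E) (xs : Fin n → E) (J : Finset (Fin n)),
      (∀ j ∈ J, xs j ∈ rA S) → n ≤ i + J.card → psi n (bgen e xs 1) ∈ GP ({1} : Set E) i n) →
      ∀ (i : ℕ) (y : Bch k E n), y ∈ BP S (rA S) i n → psi n y ∈ GP (rA S) i n := by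
    intro n hn i x hx
    have : BP S (rA S) i n ≤ (GP (rA S) i n).comap (psi n) := by
      refine Submodule.span_le.2 ?_
      rintro _ ⟨e, e', xs, J, h1, h2, rfl⟩
      rw [SetLike.mem_coe, Submodule.mem_comap]
      rw [psiR]
      rcases h2 with h2 | ⟨h2, h3⟩
      · have hJ : J.card ≤ n := by simpa using J.card_le_univ
        obtain ⟨i, rfl⟩ : ∃ i', i = i' + 1 := ⟨i - 1, by omega⟩
        exact GP_succ (P := Set.univ) i n (rT_GP e' (mul1 e') _ _ _ (hn i e xs J h1 (by omega)))
      · exact rT_GP e' (mulA e' h3) _ _ _ (hn i e xs J h1 h2)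
    exact this hx
  have psi1 : ∀ (n i : ℕ) (e : E) (xs : Fin n → E) (J : Finset (Fin n)),
      (∀ j ∈ J, xs j ∈ rA S) → n ≤ i + J.card → psi n (bgen e xs 1) ∈ GP ({1} : Set E) i n := by
    intro n
    induction n with
    | zero =>
      intro i e xs J _ _
      obtain rfl : xs = fun i : Fin 0 => i.elim0 := by funext i; exact i.elim0
      rw [hpsi0]
      exact lof_GP _ (0 : Fin 1) (by simp) _ (xgen_mem _ _ _ _ rfl)
    | succ n ih =>
      intro i e xs J hJ hc
      rw [hpsiS]
      exact sbar_mem S R sY hsY slY slX hslY0 hslX0 _ _ _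
        (psiG n ih _ _ (bp_mem S bp hbp i n e xs J hJ hc))
  have omG : ∀ n : ℕ, (∀ (i : ℕ) (e : E) (xs : Fin n → E) (J : Finset (Fin n)),
      (∀ j ∈ J, xs j ∈ rA S) → n ≤ i + J.card → om n (bgen e xs 1) ∈ B1 S {1} i (n + 1)) →
      ∀ (i : ℕ) (y : Bch k E n), y ∈ BP S (rA S) i n → om n y ∈ BP S (rA S) i (n + 1) := by
    intro n hn i x hx
    have : BP S (rA S) i n ≤ (BP S (rA S) i (n + 1)).comap (om n) := by
      refine Submodule.span_le.2 ?_
      rintro _ ⟨e, e', xs, J, h1, h2, rfl⟩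
      rw [SetLike.mem_coe, Submodule.mem_comap]
      rw [omR]
      rcases h2 with h2 | ⟨h2, h3⟩
      · have hJ : J.card ≤ n := by simpa using J.card_le_univ
        obtain ⟨i, rfl⟩ : ∃ i', i = i' + 1 := ⟨i - 1, by omega⟩
        exact B1_le_BP_succ S (P := Set.univ) i _
          (rB_B1 S e' (mul1 e') _ _ _ (hn i e xs J h1 (by omega)))
      · exact B1_le_BP S subset_rfl _ _ (rB_B1 S e' (mulA e' h3) _ _ _ (hn i e xs J h1 h2))
    exact this hx
  have om1 : ∀ (n i : ℕ) (e : E) (xs : Fin n → E) (J : Finset (Fin n)),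
      (∀ j ∈ J, xs j ∈ rA S) → n ≤ i + J.card → om n (bgen e xs 1) ∈ B1 S {1} i (n + 1) := by
    intro n
    induction n with
    | zero =>
      intro i e xs J _ _
      rw [hom0]
      exact Submodule.zero_mem _
    | succ n ih =>
      intro i e xs J hJ hc
      rw [homS]
      refine xi_mem S xi hxi _ _ _ (Submodule.sub_mem _ (Submodule.sub_mem _ ?_ ?_) ?_)
      · exact phiG _ (phi1 _) _ _ (GP_mono (one_rA S) _ _ (psi1 _ i e xs J hJ hc))
      · exact Submodule.subset_span ⟨e, 1, xs, J, hJ, Or.inr ⟨hc, one_rA S rfl⟩, rfl⟩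
      · exact omG n ih _ _ (bp_mem S bp hbp i n e xs J hJ hc)
  refine ⟨?_, ?_, ?_⟩
  · intro i n x hx
    rw [FX_eq] at hx
    rw [FB_eq]
    have : GP (Set.univ : Set E) i n ≤ (B1 S Set.univ i n).comap (phi n) := by
      refine Submodule.span_le.2 ?_
      rintro _ ⟨s, e, hs, as, e', h1, rfl⟩
      rw [SetLike.mem_coe, Submodule.mem_comap]
      rw [phiR]
      exact rB_B1 S e' (mul1 e') _ _ _ (B1_mono S (by omega) n (phi1 n s e hs as))
    exact this hx
  · intro i n y hy
    rw [FB_eq] at hy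
    rw [FX_eq]
    have : B1 S Set.univ i n ≤ (GP (Set.univ : Set E) i n).comap (psi n) := by
      refine Submodule.span_le.2 ?_
      rintro _ ⟨e, e', xs, J, h1, h2, -, rfl⟩
      rw [SetLike.mem_coe, Submodule.mem_comap]
      rw [psiR]
      exact rT_GP e' (mul1 e') _ _ _ (psi1 n i e xs J h1 h2)
    exact this hy
  · intro i n y hy
    rw [FB_eq] at hy ⊢
    have : B1 S Set.univ i n ≤ (B1 S Set.univ i (n + 1)).comap (om n) := by
      refine Submodule.span_le.2 ?_
      rintro _ ⟨e, e', xs, J, h1, h2, -, rfl⟩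
      rw [SetLike.mem_coe, Submodule.mem_comap]
      rw [omR]
      exact rB_B1 S e' (mul1 e') _ _ _ (om1 n i e xs J h1 h2)
    exact this hy

end Statement5

end HopfCrossed
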